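/- arXiv:1609.03889 — 3 statements merged into one kernel-verified Lean document; each statement's English description precedes it below -/
import Mathlib

section
/- Fix integers n ≥ 1 and k ≥ 1. For all integers i ≥ 1 and 1 ≤ j ≤ k, one has ∫_{[0, 2^{−j−k(i−1)})^n} w_k dx = 2^{(k−j)n} · ∫_{Q_1^i(k)} w_k dx = 2^{(k−j)n} (2^{(k−1)n}+1)^{−i}. -/
open MeasureTheory Set ENNReal

noncomputable section

/-- The half-open axis-parallel cube with corner `a` and side length `l`. -/
def Cube (n : ℕ) (a : Fin n → ℝ) (l : ℝ) : Set (Fin n → ℝ) :=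
  Set.univ.pi fun i => Set.Ico (a i) (a i + l)

/-- The uncentered Hardy–Littlewood maximal function over axis-parallel cubes:
`Mg(x) = sup_{Q ∋ x} |Q|⁻¹ ∫_Q g`. -/
def MaxFn {n : ℕ} (g : (Fin n → ℝ) → ℝ≥0∞) (x : Fin n → ℝ) : ℝ≥0∞ :=
  ⨆ (a : Fin n → ℝ) (l : ℝ) (_ : 0 < l) (_ : x ∈ Cube n a l),
    (volume (Cube n a l))⁻¹ * ∫⁻ y in Cube n a l, g y

/-- The cube of the sparse family `S` with parameters `k, N`:
`[0, 2^{-N})^n` for `k = 0` and `[2^k, 2^k + 2^{-N})^n` for `k ≥ 1`. -/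
def sCube (n k N : ℕ) : Set (Fin n → ℝ) :=
  Cube n (fun _ => if k = 0 then 0 else (2:ℝ)^k) ((2:ℝ)^(-(N:ℤ)))

/-- The sparse operator `T_S g = Σ_{Q ∈ S} (|Q|⁻¹ ∫_Q g) 1_Q`. -/
def TS {n : ℕ} (g : (Fin n → ℝ) → ℝ≥0∞) (x : Fin n → ℝ) : ℝ≥0∞ :=
  ∑' q : ℕ × ℕ,
    (sCube n q.1 q.2).indicator
      (fun _ => (volume (sCube n q.1 q.2))⁻¹ * ∫⁻ y in sCube n q.1 q.2, g y) x

/-- The `j`-th digit (for `j ≥ 1`) of `t ∈ [0,1)` in base `2^k`, using the expansion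
which is not eventually constant `2^k - 1`. -/
def digit (k j : ℕ) (t : ℝ) : ℤ := ⌊t * 2^(k*j)⌋ % 2^k

/-- `Ω_m(k) ⊆ [0,1)^n`: the points all of whose coordinates have base-`2^k` digits
in `{0, …, 2^{k-1}-1}` for `1 ≤ j ≤ m-1`, with `m`-th digit equal to `2^{k-1}`. -/
def Omega (n k m : ℕ) : Set (Fin n → ℝ) :=
  {x | (∀ i, x i ∈ Set.Ico (0:ℝ) 1) ∧
    ∀ i, (∀ j, 1 ≤ j → j < m → digit k j (x i) < 2^(k-1)) ∧
      digit k m (x i) = 2^(k-1)}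

/-- The weight `w_k = Σ_{m ≥ 1} (2^{kn}/(2^{(k-1)n}+1))^m 1_{Ω_m(k)}`. -/
def wk (n k : ℕ) : (Fin n → ℝ) → ℝ≥0∞ := fun x =>
  ∑' m : ℕ,
    (Omega n k (m+1)).indicator
      (fun _ => ((2:ℝ≥0∞)^(k*n) / ((2:ℝ≥0∞)^((k-1)*n) + 1))^(m+1)) x

/-- `Q_1^m(k) = [2^{-k(m-1)-1}, 2^{-k(m-1)-1} + 2^{-km})^n`. -/
def Q1 (n k m : ℕ) : Set (Fin n → ℝ) :=
  Cube n (fun _ => (2:ℝ)^(-(k*(m-1) : ℤ) - 1)) ((2:ℝ)^(-(k*m : ℤ)))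

/-- `Γ(k) = ⋃_{m ≥ 3} Q_1^m(k)`. -/
def Gamma (n k : ℕ) : Set (Fin n → ℝ) := ⋃ m : ℕ, Q1 n k (m+3)

/-- `A_k = 2^{(k-1)n} (2^{(k-1)n}+1)^2`. -/
def Ak (n k : ℕ) : ℝ≥0∞ := 2^((k-1)*n) * (2^((k-1)*n) + 1)^2

/-- The weight `w(x) = Σ_{k ≥ 3} A_k w_k(x - 2⃗^k) 1_{Γ(k)}(x - 2⃗^k)`. -/
def bigW (n : ℕ) : (Fin n → ℝ) → ℝ≥0∞ := fun x =>
  ∑' k : ℕ,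
    (Gamma n (k+3)).indicator (fun z => Ak n (k+3) * wk n (k+3) z)
      (fun i => x i - (2:ℝ)^(k+3))

/-- The test function `f(x) = Σ_{k ≥ 3} k^{-ε} A_k w_k(x - 2⃗^k)`. -/
def bigF (n : ℕ) (ε : ℝ) : (Fin n → ℝ) → ℝ≥0∞ := fun x =>
  ∑' k : ℕ,
    ((k+3 : ℝ≥0∞) ^ (-ε)) * Ak n (k+3) * wk n (k+3) (fun i => x i - (2:ℝ)^(k+3))

/-- `T` is bounded from `L^p(v)` to `L^p(u)` (for nonnegative functions, which are
required to be supported in `supp v`): there is a finite constant `C` with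
`‖Tf‖_{L^p(u)} ≤ C ‖f‖_{L^p(v)}` for all `f ∈ L^p(v)`. -/
def BddOn {n : ℕ} (T : ((Fin n → ℝ) → ℝ≥0∞) → (Fin n → ℝ) → ℝ≥0∞)
    (p : ℝ) (v u : (Fin n → ℝ) → ℝ≥0∞) : Prop :=
  ∃ C : ℝ≥0∞, C ≠ ∞ ∧ ∀ f : (Fin n → ℝ) → ℝ≥0∞, Measurable f →
    (∀ x, v x = 0 → f x = 0) → (∫⁻ x, f x ^ p * v x) < ∞ →
    ∫⁻ x, T f x ^ p * u x ≤ C ^ p * ∫⁻ x, f x ^ p * v x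

/-- The dual weight `u^{1-p'} 1_{supp u}`. -/
def dualW {n : ℕ} (u : (Fin n → ℝ) → ℝ≥0∞) (q : ℝ) : (Fin n → ℝ) → ℝ≥0∞ :=
  fun x => if u x = 0 then 0 else u x ^ (1 - q)

def PP (k m : ℕ) : Set ℝ :=
  {t | (∀ j, 1 ≤ j → j < m → digit k j t < 2^(k-1)) ∧ digit k m t = 2^(k-1)}

lemma meas_digit (k j : ℕ) : Measurable (digit k j) := by
  have h1 : Measurable (fun t : ℝ => ⌊t * 2^(k*j)⌋) :=
    Int.measurable_floor.comp (measurable_id.mul_const _)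
  exact (measurable_from_top (f := fun z : ℤ => z % 2^k)).comp h1

lemma meas_PP (k m : ℕ) : MeasurableSet (PP k m) := by
  have : PP k m = (⋂ j, ⋂ (_ : 1 ≤ j), ⋂ (_ : j < m), digit k j ⁻¹' {z | z < 2^(k-1)}) ∩
      digit k m ⁻¹' {2^(k-1)} := by
    ext t; simp [PP]
  rw [this]
  refine MeasurableSet.inter ?_ (meas_digit k m (MeasurableSet.of_discrete))
  exact MeasurableSet.iInter fun j => MeasurableSet.iInter fun _ => MeasurableSet.iInter fun _ =>
    meas_digit k j (MeasurableSet.of_discrete)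

lemma digit_succ (k j : ℕ) (t : ℝ) : digit k (j+1) t = digit k j (2^k * t) := by
  unfold digit
  congr 2
  rw [Nat.mul_succ, pow_add]; ring

lemma digit_add (k j : ℕ) (hj : 1 ≤ j) (t : ℝ) (c : ℕ) : digit k j (c + t) = digit k j t := by
  unfold digit
  obtain ⟨l, rfl⟩ := Nat.exists_eq_add_of_le' hj
  have : (c + t) * 2^(k*(l+1)) = t * 2^(k*(l+1)) + ((c * 2^(k*l) * 2^k : ℤ) : ℝ) := by
    push_cast; rw [Nat.mul_succ, pow_add]; ring
  rw [this, Int.floor_add_intCast, Int.add_mul_emod_self_right]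

lemma PP_add (k m : ℕ) (hm : 1 ≤ m) (t : ℝ) (c : ℕ) : (c + t) ∈ PP k m ↔ t ∈ PP k m := by
  unfold PP
  simp only [Set.mem_ofPred_eq, digit_add k m hm]
  refine and_congr_left fun _ => forall_congr' fun j => forall_congr' fun hj => ?_
  rw [digit_add k j hj]

lemma two_pow_pred (k : ℕ) (hk : 1 ≤ k) : (2:ℝ)^k = 2 * 2^(k-1) := by
  obtain ⟨l, rfl⟩ := Nat.exists_eq_add_of_le' hk
  simp [pow_succ]; ring

lemma two_pow_pred_int (k : ℕ) (hk : 1 ≤ k) : (2:ℤ)^k = 2 * 2^(k-1) := by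
  obtain ⟨l, rfl⟩ := Nat.exists_eq_add_of_le' hk
  simp [pow_succ]; ring

/-- digit of small numbers -/
lemma digit_small (k j : ℕ) (t : ℝ) (h0 : 0 ≤ t) (h1 : t * 2^(k*j) < 2^k) :
    digit k j t = ⌊t * 2^(k*j)⌋ := by
  unfold digit
  refine Int.emod_eq_of_lt (Int.floor_nonneg.2 (by positivity)) ?_
  rw [Int.floor_lt]; push_cast; exact h1

lemma digit_lt_half (k j : ℕ) (hk : 1 ≤ k) (t : ℝ) (h0 : 0 ≤ t) (h1 : t * 2^(k*j) < 2^(k-1)) :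
    digit k j t < 2^(k-1) := by
  have h2 := two_pow_pred k hk
  have h3 : (0:ℝ) < 2^(k-1) := by positivity
  rw [digit_small k j t h0 (by linarith), Int.floor_lt]; push_cast; exact h1

lemma PP_succ (k m : ℕ) (hm : 1 ≤ m) (t : ℝ) :
    t ∈ PP k (m+1) ↔ digit k 1 t < 2^(k-1) ∧ 2^k * t ∈ PP k m := by
  unfold PP
  simp only [Set.mem_ofPred_eq, ← digit_succ]
  constructor
  · rintro ⟨h1, h2⟩
    exact ⟨h1 1 le_rfl (by omega), fun j hj hjm => h1 (j+1) (by omega) (by omega), h2⟩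
  · rintro ⟨h1, h2, h3⟩
    refine ⟨fun j hj hjm => ?_, h3⟩
    obtain ⟨l, rfl⟩ := Nat.exists_eq_add_of_le' hj
    rcases Nat.eq_zero_or_pos l with rfl | hl
    · exact h1
    · exact h2 l hl (by omega)

lemma vol_scale (k m : ℕ) (hk : 1 ≤ k) (hm : 1 ≤ m) (δ : ℝ) (hδ : δ * 2^k ≤ 2^(k-1)) :
    volume (PP k (m+1) ∩ Ico 0 δ) = (2⁻¹)^k * volume (PP k m ∩ Ico 0 (δ * 2^k)) := by
  have h2 : (0:ℝ) < 2^k := by positivity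
  have : PP k (m+1) ∩ Ico 0 δ = (fun t => (2^k : ℝ) * t) ⁻¹' (PP k m ∩ Ico 0 (δ * 2^k)) := by
    ext t
    simp only [mem_inter_iff, PP_succ k m hm, mem_preimage, mem_Ico]
    have e1 : (0 ≤ 2^k * t) ↔ 0 ≤ t := by simp [h2]
    have e2 : (2^k * t < δ * 2^k) ↔ t < δ := by rw [mul_comm]; exact mul_lt_mul_iff_left₀ h2
    rw [e1, e2]
    constructor
    · rintro ⟨⟨_, h⟩, h'⟩; exact ⟨h, h'⟩
    · rintro ⟨h, h'⟩
      refine ⟨⟨digit_lt_half k 1 hk t h'.1 ?_, h⟩, h'⟩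
      rw [mul_one]
      exact lt_of_lt_of_le ((mul_lt_mul_iff_left₀ h2).2 h'.2) hδ
  rw [this, Real.volume_preimage_mul_left h2.ne']
  congr 1
  rw [abs_of_pos (by positivity), ← inv_pow, ENNReal.ofReal_pow (by positivity),
    ENNReal.ofReal_inv_of_pos (by norm_num)]
  simp

lemma vol_nat (k m : ℕ) (hm : 1 ≤ m) (c : ℕ) :
    volume (PP k m ∩ Ico 0 (c:ℝ)) = c * volume (PP k m ∩ Ico 0 1) := by
  induction c with
  | zero => simp
  | succ c ih =>
    have h1 : PP k m ∩ Ico 0 ((c+1 : ℕ):ℝ) =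
        (PP k m ∩ Ico 0 (c:ℝ)) ∪ (PP k m ∩ Ico (c:ℝ) (c+1)) := by
      rw [← inter_union_distrib_left, Ico_union_Ico_eq_Ico (by positivity) (by linarith)]
      push_cast; rfl
    have h2 : volume (PP k m ∩ Ico (c:ℝ) (c+1)) = volume (PP k m ∩ Ico 0 1) := by
      rw [← measure_preimage_add volume (c:ℝ) (PP k m ∩ Ico (c:ℝ) (c+1))]
      congr 1
      ext t
      simp only [mem_preimage, mem_inter_iff, PP_add k m hm, mem_Ico]
      refine and_congr_right fun _ => ?_
      constructor <;> rintro ⟨h, h'⟩ <;> constructor <;> linarith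
    rw [h1, measure_union _ ((meas_PP k m).inter measurableSet_Ico), ih, h2]
    · push_cast; ring
    · refine Set.disjoint_left.2 ?_
      rintro t ⟨_, h⟩ ⟨_, h'⟩
      exact absurd h.2 (not_lt.2 h'.1)

lemma ofReal_two_pow (s : ℕ) : ENNReal.ofReal ((2:ℝ)^s)⁻¹ = (2⁻¹)^s := by
  rw [← inv_pow, ENNReal.ofReal_pow (by positivity),
    ENNReal.ofReal_inv_of_pos (by norm_num)]
  simp

lemma vol_one (k : ℕ) (hk : 1 ≤ k) : volume (PP k 1 ∩ Ico 0 1) = (2⁻¹)^k := by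
  have h2 := two_pow_pred k hk
  have h3 : (1:ℝ) ≤ 2^(k-1) := one_le_pow₀ (by norm_num)
  have h4 : (0:ℝ) < 2^k := by positivity
  have : PP k 1 ∩ Ico 0 1 = Ico (2⁻¹ : ℝ) (2⁻¹ + (2^k)⁻¹) := by
    ext t
    have e1 : (2⁻¹ + (2^k)⁻¹ : ℝ) * 2^k = 2^(k-1) + 1 := by
      rw [add_mul, inv_mul_cancel₀ h4.ne', h2]; ring
    have e2 : (2⁻¹ : ℝ) * 2^k = 2^(k-1) := by rw [h2]; ring
    have key : t ∈ Ico (2⁻¹ : ℝ) (2⁻¹ + (2^k)⁻¹) ↔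
        (2:ℝ)^(k-1) ≤ t * 2^k ∧ t * 2^k < 2^(k-1) + 1 := by
      rw [← e1, ← e2, mul_le_mul_iff_left₀ h4, mul_lt_mul_iff_left₀ h4]; rfl
    rw [key]
    simp only [PP, mem_inter_iff, mem_ofPred_eq, mem_Ico]
    constructor
    · rintro ⟨⟨_, h⟩, h0, h1⟩
      rw [digit_small k 1 t h0 (by rw [mul_one]; nlinarith), Int.floor_eq_iff] at h
      push_cast at h; rw [mul_one] at h; exact h
    · intro h
      have h0 : 0 ≤ t := by
        by_contra hc
        nlinarith
      have h1 : t < 1 := by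
        by_contra hc
        push Not at hc
        rcases eq_or_lt_of_le h3 with h5 | h5
        · nlinarith
        · nlinarith
      refine ⟨⟨fun j h1 h2 => by omega, ?_⟩, h0, h1⟩
      rw [digit_small k 1 t h0 (by rw [mul_one]; nlinarith), Int.floor_eq_iff]
      push_cast; rw [mul_one]; exact h
  rw [this, Real.volume_Ico, add_sub_cancel_left, ofReal_two_pow]

lemma vol_p (k r : ℕ) (hk : 1 ≤ k) : volume (PP k (r+1) ∩ Ico 0 1) = (2⁻¹)^(k+r) := by
  have h2 := two_pow_pred k hk
  have h4 : (0:ℝ) < 2^k := by positivity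
  induction r with
  | zero => simpa using vol_one k hk
  | succ r ih =>
    have : PP k (r+1+1) ∩ Ico 0 1 = PP k (r+1+1) ∩ Ico 0 2⁻¹ := by
      ext t
      simp only [mem_inter_iff, mem_Ico]
      refine and_congr_right fun h => and_congr_right fun h0 => ?_
      constructor
      · intro h1
        have h5 := ((PP_succ k (r+1) (by omega) t).1 h).1
        rw [digit_small k 1 t h0 (by rw [mul_one]; nlinarith), Int.floor_lt] at h5
        push_cast at h5
        rw [mul_one] at h5
        nlinarith
      · intro h1; linarith
    rw [this, vol_scale k (r+1) hk (by omega) _ (by rw [h2]; linarith)]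
    have e : (2⁻¹ : ℝ) * 2^k = ((2^(k-1) : ℕ) : ℝ) := by rw [h2]; push_cast; ring
    rw [e, vol_nat k _ (by omega), ih]
    obtain ⟨l, rfl⟩ := Nat.exists_eq_add_of_le' hk
    push_cast
    have e3 : (2:ℝ≥0∞)^l * (2⁻¹)^l = 1 := by
      rw [← mul_pow, ENNReal.mul_inv_cancel (by norm_num) (by norm_num), one_pow]
    calc (2⁻¹:ℝ≥0∞)^(l+1) * (2^l * (2⁻¹)^(l+1+r)) = (2^l * (2⁻¹)^l) * (2⁻¹)^(l+1+(r+1)) := by ring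
      _ = _ := by rw [e3, one_mul]

lemma vol_main (k : ℕ) (hk : 1 ≤ k) (j : ℕ) (hj1 : 1 ≤ j) (hjk : j ≤ k) (i r : ℕ) :
    volume (PP k (i+1+r+1) ∩ Ico 0 ((2:ℝ)^(-((j + k*i : ℕ) : ℤ)))) =
      2^(k-j) * (2⁻¹)^(k*(i+1)+k+r) := by
  induction i with
  | zero =>
    have e : ((2:ℝ)^(-((j + k*0 : ℕ) : ℤ))) * 2^k = ((2^(k-j) : ℕ) : ℝ) := by
      push_cast
      rw [← zpow_natCast, ← zpow_natCast, ← zpow_add₀ (by norm_num)]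
      congr 1
      push_cast [hjk]; ring
    have hr : 0+1+r+1 = (r+1)+1 := by ring
    rw [hr, vol_scale k (r+1) hk (by omega) _ ?_, e, vol_nat k _ (by omega), vol_p k r hk]
    · push_cast; ring
    · rw [e]; push_cast
      exact pow_le_pow_right₀ (by norm_num) (by omega)
  | succ i ih =>
    have e : ((2:ℝ)^(-((j + k*(i+1) : ℕ) : ℤ))) * 2^k = (2:ℝ)^(-((j + k*i : ℕ) : ℤ)) := by
      rw [← zpow_natCast, ← zpow_add₀ (by norm_num)]
      congr 1
      push_cast; ring
    have hr : i+1+1+r+1 = (i+1+r+1)+1 := by ring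
    rw [hr, vol_scale k (i+1+r+1) hk (by omega) _ ?_, e, ih]
    · ring
    · rw [e]
      rw [zpow_neg, zpow_natCast]
      calc ((2:ℝ)^(j+k*i))⁻¹ ≤ 1 := inv_le_one_of_one_le₀ (one_le_pow₀ (by norm_num))
        _ ≤ _ := one_le_pow₀ (by norm_num)

lemma PP_empty (k : ℕ) (hk : 1 ≤ k) (j : ℕ) (hj1 : 1 ≤ j) (i m : ℕ) (hm : m ≤ i + 1) :
    PP k m ∩ Ico 0 ((2:ℝ)^(-((j + k*i : ℕ) : ℤ))) = ∅ := by
  ext t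
  simp only [mem_inter_iff, mem_Ico, mem_empty_iff_false, iff_false]
  rintro ⟨h, h0, h1⟩
  refine (digit_lt_half k m hk t h0 ?_).ne h.2
  have h4 : (0:ℝ) < 2^(k*m) := by positivity
  refine ((mul_lt_mul_iff_left₀ h4).2 h1).trans_le ?_
  rw [← zpow_natCast, ← zpow_natCast, ← zpow_add₀ (by norm_num)]
  refine zpow_le_zpow_right₀ (by norm_num) ?_
  push_cast [hk]
  have : (k:ℤ) * m ≤ k * (i+1) := by gcongr; exact_mod_cast hm
  have : (1:ℤ) ≤ j := by exact_mod_cast hj1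
  linarith

lemma Omega_eq (n k m : ℕ) : Omega n k m = Set.univ.pi fun _ => (PP k m ∩ Ico 0 1) := by
  ext x
  simp only [Omega, PP, mem_ofPred_eq, mem_univ_pi, mem_inter_iff]
  rw [← forall_and]
  exact forall_congr' fun i => and_comm

lemma meas_Omega (n k m : ℕ) : MeasurableSet (Omega n k m) := by
  rw [Omega_eq]
  exact MeasurableSet.univ_pi fun _ => (meas_PP k m).inter measurableSet_Ico

lemma lint_wk (n k : ℕ) (S : Set (Fin n → ℝ)) :
    ∫⁻ x in S, wk n k x = ∑' m : ℕ, ((2:ℝ≥0∞)^(k*n) / ((2:ℝ≥0∞)^((k-1)*n) + 1))^(m+1) *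
      volume (Omega n k (m+1) ∩ S) := by
  unfold wk
  rw [lintegral_tsum]
  · congr 1; ext m
    rw [lintegral_indicator_const (meas_Omega _ _ _), Measure.restrict_apply (meas_Omega _ _ _)]
  · intro m
    exact (measurable_const.indicator (meas_Omega _ _ _)).aemeasurable

lemma vol_Omega_cube (n k m : ℕ) (δ : ℝ) (hδ : δ ≤ 1) :
    volume (Omega n k m ∩ Cube n (fun _ => 0) δ) = (volume (PP k m ∩ Ico 0 δ))^n := by
  have : Omega n k m ∩ Cube n (fun _ => 0) δ = Set.univ.pi fun _ => (PP k m ∩ Ico 0 δ) := by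
    rw [Omega_eq, Cube, ← Set.pi_inter_distrib]
    congr 1; ext i t
    simp only [mem_inter_iff, mem_Ico, zero_add]
    constructor
    · rintro ⟨⟨h, _⟩, h'⟩; exact ⟨h, h'⟩
    · rintro ⟨h, h'⟩; exact ⟨⟨h, h'.1, h'.2.trans_le hδ⟩, h'⟩
  rw [this, volume_pi_pi]; simp

lemma ncancel (s : ℕ) : (2:ℝ≥0∞)^s * (2⁻¹)^s = 1 := by
  rw [← mul_pow, ENNReal.mul_inv_cancel (by norm_num) (by norm_num), one_pow]

lemma geom (b : ℝ≥0∞) (hb : b ≠ ⊤) : ∑' r : ℕ, (b * (b+1)⁻¹)^r = b + 1 := by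
  have h0 : b + 1 ≠ 0 := by simp
  have ht : b + 1 ≠ ⊤ := by simp [hb]
  rw [ENNReal.tsum_geometric]
  have h1 : (1:ℝ≥0∞) - b * (b+1)⁻¹ = (b+1)⁻¹ := by
    refine ENNReal.sub_eq_of_eq_add ?_ ?_
    · exact ENNReal.mul_ne_top hb (ENNReal.inv_ne_top.2 h0)
    · calc (1:ℝ≥0∞) = (b+1) * (b+1)⁻¹ := (ENNReal.mul_inv_cancel h0 ht).symm
        _ = _ := by ring
  rw [h1, inv_inv]

lemma alg_term {R : Type*} [CommSemiring R] (c h q : R) (l n i r s : ℕ) :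
    (c^((l+1)*n) * q)^(i+1+r+1) * (c^s * h^((l+1)*(i+1)+(l+1)+r))^n =
    c^(s*n) * q^(i+2) * (c^(l*n) * q)^r *
      (c^(((l+1)*(i+1)+(l+1)+r)*n) * h^(((l+1)*(i+1)+(l+1)+r)*n)) := by
  simp only [mul_pow, ← pow_mul]
  ring

lemma term_eq (n k : ℕ) (hk : 1 ≤ k)
    (i j : ℕ) (hj1 : 1 ≤ j) (hjk : j ≤ k) (r : ℕ) :
    ((2:ℝ≥0∞)^(k*n) / ((2:ℝ≥0∞)^((k-1)*n) + 1))^(r+(i+1)+1) *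
      (volume (PP k (r+(i+1)+1) ∩ Ico 0 ((2:ℝ)^(-((j + k*i : ℕ) : ℤ)))))^n =
      2^((k-j)*n) * (((2:ℝ≥0∞)^((k-1)*n)+1)⁻¹)^(i+2) *
        ((2:ℝ≥0∞)^((k-1)*n) * ((2:ℝ≥0∞)^((k-1)*n)+1)⁻¹)^r := by
  have hr : r+(i+1)+1 = i+1+r+1 := by ring
  rw [hr, vol_main k hk j hj1 hjk i r, div_eq_mul_inv]
  obtain ⟨l, rfl⟩ := Nat.exists_eq_add_of_le' hk
  rw [Nat.add_sub_cancel]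
  have e := ncancel (((l+1)*(i+1)+(l+1)+r)*n)
  have a := alg_term (2:ℝ≥0∞) (2⁻¹) (((2:ℝ≥0∞)^(l*n)+1)⁻¹) l n i r (l+1-j)
  rw [e, mul_one] at a
  exact a

lemma tsum_shift (N : ℕ) (f : ℕ → ℝ≥0∞) (h : ∀ m ∈ Finset.range N, f m = 0) :
    ∑' m, f m = ∑' r, f (r+N) := by
  have := Summable.sum_add_tsum_nat_add' (f := f) (k := N) ENNReal.summable
  rw [Finset.sum_eq_zero h, zero_add] at this
  exact this.symm

lemma mass_cube (n k : ℕ) (hn : 1 ≤ n) (hk : 1 ≤ k)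
    (i j : ℕ) (hj1 : 1 ≤ j) (hjk : j ≤ k) :
    ∫⁻ x in Cube n (fun _ => 0) ((2:ℝ)^(-((j + k*i : ℕ) : ℤ))), wk n k x
        = 2^((k-j)*n) * (((2:ℝ≥0∞)^((k-1)*n) + 1)⁻¹)^(i+1) := by
  have hδ : ((2:ℝ)^(-((j + k*i : ℕ) : ℤ))) ≤ 1 := by
    rw [zpow_neg, zpow_natCast]
    exact inv_le_one_of_one_le₀ (one_le_pow₀ (by norm_num))
  rw [lint_wk]
  simp only [vol_Omega_cube n k _ _ hδ]
  rw [tsum_shift (i+1)]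
  swap
  · intro m hm
    rw [Finset.mem_range] at hm
    rw [PP_empty k hk j hj1 i (m+1) (by omega)]
    simp [show n ≠ 0 by omega]
  have term := term_eq n k hk i j hj1 hjk
  have hbt : (2:ℝ≥0∞)^((k-1)*n) ≠ ⊤ := ENNReal.pow_ne_top (by norm_num)
  generalize (2:ℝ≥0∞)^((k-1)*n) = b at term hbt ⊢
  rw [tsum_congr term, ENNReal.tsum_mul_left, geom b hbt, mul_assoc]
  congr 1
  rw [pow_succ _ (i+1), mul_assoc, ENNReal.inv_mul_cancel (by simp) (by simp [hbt]), mul_one]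

lemma mass_Q1 (n k : ℕ) (hn : 1 ≤ n) (hk : 1 ≤ k) (i : ℕ) :
    ∫⁻ x in Q1 n k (i+1), wk n k x = (((2:ℝ≥0∞)^((k-1)*n) + 1)⁻¹)^(i+1) := by
  have h2 := two_pow_pred k hk
  have h3 : (1:ℝ) ≤ 2^(k-1) := one_le_pow₀ (by norm_num)
  have h4 : (0:ℝ) < 2^k := by positivity
  set A : ℝ := ((2:ℝ)^(k*i))⁻¹ with hA
  have hA0 : 0 < A := by positivity
  have hA1 : A ≤ 1 := inv_le_one_of_one_le₀ (one_le_pow₀ (by norm_num))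
  have hc1 : (2:ℝ)^(-((k:ℤ)*(((i+1:ℕ):ℤ)-1)) - 1) = A * 2⁻¹ := by
    rw [zpow_sub₀ (by norm_num), zpow_neg, hA, ← zpow_natCast]; push_cast; simp; ring
  have hc2 : (2:ℝ)^(-((k:ℤ)*((i+1:ℕ):ℤ))) = A * (2^k)⁻¹ := by
    rw [zpow_neg, hA, ← mul_inv, ← pow_add, ← zpow_natCast]; push_cast; ring_nf
  have hQ : Q1 n k (i+1) = Set.univ.pi fun _ => Ico (A * 2⁻¹) (A * 2⁻¹ + A * (2^k)⁻¹) := by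
    unfold Q1 Cube; rw [hc1, hc2]
  have hinv : (2^k:ℝ)⁻¹ ≤ 2⁻¹ := inv_anti₀ (by norm_num) (by linarith)
  -- digits on the interval
  have hd : ∀ t ∈ Ico (A * 2⁻¹) (A * 2⁻¹ + A * (2^k)⁻¹),
      0 ≤ t ∧ t < 1 ∧ (∀ m, 1 ≤ m → m < i+1 → digit k m t = 0) ∧
      digit k (i+1) t = 2^(k-1) := by
    rintro t ⟨ht1, ht2⟩
    have t0 : 0 ≤ t := by nlinarith
    have tA : t < A := by nlinarith
    refine ⟨t0, by linarith, ?_, ?_⟩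
    · intro m hm hmi
      have h6 : t * 2^(k*m) < 1 := by
        calc t * 2^(k*m) < A * 2^(k*m) := by gcongr
          _ ≤ A * 2^(k*i) := by
            gcongr
            · norm_num
            · omega
          _ = 1 := inv_mul_cancel₀ (by positivity)
      rw [digit_small k m t t0 (h6.trans_le (by linarith))]
      rw [Int.floor_eq_zero_iff]
      exact ⟨by positivity, h6⟩
    · have e : A * 2^(k*(i+1)) = 2^k := by
        rw [Nat.mul_succ, pow_add, ← mul_assoc, inv_mul_cancel₀ (by positivity), one_mul]
      have p : (0:ℝ) < 2^(k*(i+1)) := by positivity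
      have l1 : (2:ℝ)^(k-1) ≤ t * 2^(k*(i+1)) := by
        have := (mul_le_mul_iff_left₀ p).2 ht1
        have e5 : A * 2⁻¹ * 2^(k*(i+1)) = 2^(k-1) := by
          rw [mul_right_comm, e, h2]; ring
        linarith
      have l2 : t * 2^(k*(i+1)) < 2^(k-1) + 1 := by
        have := (mul_lt_mul_iff_left₀ p).2 ht2
        have e5 : (A * 2⁻¹ + A * (2^k)⁻¹) * 2^(k*(i+1)) = 2^(k-1) + 1 := by
          calc _ = (A * 2^(k*(i+1))) * 2⁻¹ + (A * 2^(k*(i+1))) * (2^k)⁻¹ := by ring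
            _ = _ := by rw [e, mul_inv_cancel₀ h4.ne', h2]; ring
        linarith
      rw [digit_small k (i+1) t t0 (by linarith), Int.floor_eq_iff]
      push_cast
      exact ⟨l1, l2⟩
  have i0 : Fin n := ⟨0, hn⟩
  have hsub : Q1 n k (i+1) ⊆ Omega n k (i+1) := by
    rw [hQ, Omega_eq]
    refine Set.pi_mono fun _ _ t ht => ?_
    obtain ⟨a, b, c, d⟩ := hd t ht
    refine ⟨⟨fun m h1 h2 => ?_, d⟩, a, b⟩
    rw [c m h1 h2]; positivity
  have hdis : ∀ m, m ≠ i → Omega n k (m+1) ∩ Q1 n k (i+1) = ∅ := by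
    intro m hm
    rw [Set.eq_empty_iff_forall_notMem]
    rintro x ⟨hx1, hx2⟩
    rw [hQ] at hx2
    obtain ⟨a, b, c, d⟩ := hd (x i0) (hx2 i0 trivial)
    obtain ⟨e, f⟩ := hx1.2 i0
    rcases lt_or_gt_of_ne hm with h | h
    · rw [c (m+1) (by omega) (by omega)] at f
      have : (0:ℤ) < 2^(k-1) := by positivity
      omega
    · have := e (i+1) (by omega) (by omega)
      omega
  rw [lint_wk, tsum_eq_single i]
  · rw [Set.inter_eq_right.2 hsub, hQ, volume_pi_pi]
    simp only [Real.volume_Ico, add_sub_cancel_left, Finset.prod_const, Finset.card_univ,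
      Fintype.card_fin]
    rw [hA, ← mul_inv, ← pow_add, ofReal_two_pow, div_eq_mul_inv, mul_pow, ← pow_mul, ← pow_mul,
      mul_right_comm, show (k*i+k)*n = k*n*(i+1) by ring, ncancel, one_mul]
  · intro m hm
    rw [hdis m hm]; simp

/-- For `n ≥ 1`, `k ≥ 1`, all `i ≥ 1` and `1 ≤ j ≤ k`:
`∫_{[0,2^{-j-k(i-1)})^n} w_k = 2^{(k-j)n} ∫_{Q_1^i(k)} w_k = 2^{(k-j)n} (2^{(k-1)n}+1)^{-i}`. -/
theorem wk_mass_corner_cubes (n k : ℕ) (hn : 1 ≤ n) (hk : 1 ≤ k)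
    (i j : ℕ) (hi : 1 ≤ i) (hj1 : 1 ≤ j) (hjk : j ≤ k) :
    (∫⁻ x in Cube n (fun _ => 0) ((2:ℝ)^(-((j + k*(i-1) : ℕ) : ℤ))), wk n k x
        = 2^((k-j)*n) * ∫⁻ x in Q1 n k i, wk n k x) ∧
    (∫⁻ x in Cube n (fun _ => 0) ((2:ℝ)^(-((j + k*(i-1) : ℕ) : ℤ))), wk n k x
        = 2^((k-j)*n) * (((2:ℝ≥0∞)^((k-1)*n) + 1)⁻¹)^i) := by
  obtain ⟨i, rfl⟩ := Nat.exists_eq_add_of_le' hi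
  rw [Nat.add_sub_cancel, mass_Q1 n k hn hk i]
  exact ⟨mass_cube n k hn hk i j hj1 hjk, mass_cube n k hn hk i j hj1 hjk⟩
end
end

section
/- Fix an integer n ≥ 1, p ∈ (1,∞) with p' = p/(p−1), ε ∈ (1/p', 1), and an integer k ≥ 3. Then for every x ∈ [0,1)^n, T_S f(x + 2⃗^k) = k^{−ε} A_k · T_S(w_k)(x). -/
open MeasureTheory Set ENNReal

noncomputable section

lemma corner_inj (i j : ℕ) (t : ℝ)
    (h1 : (if i = 0 then 0 else (2:ℝ)^i) ≤ t) (h2 : t < (if i = 0 then 0 else (2:ℝ)^i) + 1)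
    (h3 : (if j = 0 then 0 else (2:ℝ)^j) ≤ t) (h4 : t < (if j = 0 then 0 else (2:ℝ)^j) + 1) :
    i = j := by
  have key : (if i = 0 then 0 else 2^i : ℕ) = (if j = 0 then 0 else 2^j : ℕ) := by
    have e : ∀ i : ℕ, (if i = 0 then 0 else (2:ℝ)^i) = ((if i = 0 then 0 else 2^i : ℕ) : ℝ) := by
      intro i; split_ifs <;> simp
    rw [e] at h1 h2 h3 h4
    have a : ((if i = 0 then 0 else 2^i : ℕ) : ℝ) < ((if j = 0 then 0 else 2^j : ℕ) : ℝ) + 1 := by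
      linarith
    have b : ((if j = 0 then 0 else 2^j : ℕ) : ℝ) < ((if i = 0 then 0 else 2^i : ℕ) : ℝ) + 1 := by
      linarith
    have a' := Nat.lt_succ_iff.mp (by exact_mod_cast a)
    have b' := Nat.lt_succ_iff.mp (by exact_mod_cast b)
    exact le_antisymm a' b'
  by_cases hi : i = 0 <;> by_cases hj : j = 0
  · omega
  · exact absurd key.symm (by simp [hi, hj])
  · exact absurd key (by simp [hi, hj])
  · simpa [hi, hj] using key

lemma zpow_neg_le_one' (N : ℕ) : (2:ℝ)^(-(N:ℤ)) ≤ 1 :=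
  zpow_le_one_of_nonpos₀ (by norm_num) (by omega)

lemma sCube_sub (n k N : ℕ) (z : Fin n → ℝ) (hz : z ∈ sCube n k N) (i : Fin n) :
    (if k = 0 then 0 else (2:ℝ)^k) ≤ z i ∧ z i < (if k = 0 then 0 else (2:ℝ)^k) + 1 := by
  have h := hz i (mem_univ i)
  have := zpow_neg_le_one' N
  exact ⟨h.1, by linarith [h.2]⟩

lemma TS_eq (n : ℕ) (hn : 1 ≤ n) (g : (Fin n → ℝ) → ℝ≥0∞) (k : ℕ) (z : Fin n → ℝ)
    (hz : z ∈ sCube n k 0) :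
    TS g z = ∑' N : ℕ, (sCube n k N).indicator
      (fun _ => (volume (sCube n k N))⁻¹ * ∫⁻ y in sCube n k N, g y) z := by
  unfold TS
  rw [ENNReal.tsum_prod', tsum_eq_single k]
  intro j hj
  rw [ENNReal.tsum_eq_zero]
  intro N
  apply indicator_of_notMem
  intro hm
  have h1 := sCube_sub n j N z hm ⟨0, hn⟩
  have h2 := sCube_sub n k 0 z hz ⟨0, hn⟩
  exact hj (corner_inj _ _ _ h1.1 h1.2 h2.1 h2.2)

lemma mem_shift (n k N : ℕ) (hk : k ≠ 0) (x : Fin n → ℝ) :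
    (x + fun _ => (2:ℝ)^k) ∈ sCube n k N ↔ x ∈ sCube n 0 N := by
  simp only [sCube, Cube, mem_pi, mem_univ, true_implies, mem_Ico, hk, if_true, if_false,
    Pi.add_apply]
  refine forall_congr' fun i => ?_
  constructor <;> rintro ⟨a, b⟩ <;> constructor <;> linarith

lemma meas_sCube (n k N : ℕ) : MeasurableSet (sCube n k N) :=
  MeasurableSet.univ_pi fun _ => measurableSet_Ico

lemma setLIntegral_shift (n k N : ℕ) (hk : k ≠ 0) (g : (Fin n → ℝ) → ℝ≥0∞) :
    ∫⁻ y in sCube n k N, g y = ∫⁻ y in sCube n 0 N, g (y + fun _ => (2:ℝ)^k) := by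
  rw [← lintegral_indicator (meas_sCube n k N), ← lintegral_indicator (meas_sCube n 0 N),
    ← lintegral_add_right_eq_self _ (fun _ => (2:ℝ)^k : Fin n → ℝ)]
  refine lintegral_congr fun y => ?_
  by_cases h : y ∈ sCube n 0 N
  · rw [indicator_of_mem h, indicator_of_mem ((mem_shift n k N hk y).2 h)]
  · rw [indicator_of_notMem h, indicator_of_notMem (fun h' => h ((mem_shift n k N hk y).1 h'))]

lemma vol_sCube (n k N : ℕ) (hk : k ≠ 0) : volume (sCube n k N) = volume (sCube n 0 N) := by
  have := setLIntegral_shift n k N hk (fun _ => 1)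
  simpa using this

lemma wk_supp (n k : ℕ) (z : Fin n → ℝ) (i : Fin n) (h : ¬ (0 ≤ z i ∧ z i < 1)) :
    wk n k z = 0 := by
  unfold wk
  rw [ENNReal.tsum_eq_zero]
  intro m
  exact indicator_of_notMem (fun hm => h (hm.1 i)) _

lemma bigF_shift (n : ℕ) (hn : 1 ≤ n) (ε : ℝ) (m N : ℕ) (y : Fin n → ℝ)
    (hy : y ∈ sCube n 0 N) :
    bigF n ε (y + fun _ => (2:ℝ)^(m+3))
      = ((m+3 : ℕ) : ℝ≥0∞) ^ (-ε) * Ak n (m+3) * wk n (m+3) y := by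
  unfold bigF
  rw [tsum_eq_single m]
  · congr 2
    · push_cast; rfl
    · funext i; simp
  · intro j hj
    rw [wk_supp n (j+3) _ ⟨0, hn⟩, mul_zero]
    rintro ⟨h1, h2⟩
    have h := sCube_sub n 0 N y hy ⟨0, hn⟩
    simp only [Pi.add_apply, if_true] at h1 h2 h
    apply hj
    have := corner_inj (j+3) (m+3) (y ⟨0, hn⟩ + 2^(m+3))
      (by simp only [Nat.succ_ne_zero, if_false, Nat.add_eq_zero_iff]; norm_num; linarith)
      (by norm_num; linarith) (by norm_num; linarith) (by norm_num; linarith)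
    omega

/-- For `n ≥ 1`, `p ∈ (1,∞)` with `p' = p/(p-1)`, `ε ∈ (1/p', 1)`,
`k ≥ 3`, and every `x ∈ [0,1)^n`: `T_S f(x + 2⃗^k) = k^{-ε} A_k T_S(w_k)(x)`. -/
theorem sparse_f_shift_formula (n : ℕ) (hn : 1 ≤ n) (p : ℝ) (hp : 1 < p)
    (ε : ℝ) (hε1 : 1 / (p/(p-1)) < ε) (hε2 : ε < 1)
    (k : ℕ) (hk : 3 ≤ k) (x : Fin n → ℝ) (hx : x ∈ Cube n (fun _ => 0) 1) :
    TS (bigF n ε) (fun i => x i + (2:ℝ)^k)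
      = (k : ℝ≥0∞) ^ (-ε) * Ak n k * TS (wk n k) x := by
  obtain ⟨m, rfl⟩ : ∃ m, k = m + 3 := ⟨k - 3, by omega⟩
  have hx0 : x ∈ sCube n 0 0 := by simpa [sCube] using hx
  have hk0 : m + 3 ≠ 0 := by omega
  have hshift := mem_shift n (m+3) 0 hk0 x
  change TS (bigF n ε) (x + fun _ => (2:ℝ)^(m+3)) = _
  rw [TS_eq n hn _ (m+3) _ (hshift.2 hx0), TS_eq n hn _ 0 x hx0, ← ENNReal.tsum_mul_left]
  have hc : ((m+3 : ℕ) : ℝ≥0∞) ^ (-ε) * Ak n (m+3) ≠ ∞ := by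
    apply ENNReal.mul_ne_top
    · exact ENNReal.rpow_ne_top_of_ne_zero (by simp) (ENNReal.natCast_ne_top _)
    · unfold Ak; finiteness
  refine tsum_congr fun N => ?_
  by_cases h : x ∈ sCube n 0 N
  · rw [indicator_of_mem h, indicator_of_mem ((mem_shift n (m+3) N hk0 x).2 h),
      vol_sCube n (m+3) N hk0, setLIntegral_shift n (m+3) N hk0,
      setLIntegral_congr_fun (meas_sCube n 0 N) (fun y hy => bigF_shift n hn ε m N y hy),
      lintegral_const_mul' _ _ hc]
    ring
  · rw [indicator_of_notMem h,
      indicator_of_notMem (fun h' => h ((mem_shift n (m+3) N hk0 x).1 h')), mul_zero]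
end
end

section
/- Fix integers n ≥ 1 and k ≥ 3. For every x ∈ 2⃗^k + Γ(k) and every axis-parallel cube Q containing x with side length ℓ(Q) ≤ 2^{k−2}, one has (1/|Q|)∫_Q w dy ≤ 9^n · w(x). -/
open MeasureTheory Set ENNReal

noncomputable section

lemma aux_mem_Q1 {n k m : ℕ} (hk : 1 ≤ k) (z : Fin n → ℝ) :
    z ∈ Q1 n k (m+1) ↔ ∀ i, (2:ℝ)^(k-1) ≤ z i * 2^(k*(m+1)) ∧
      z i * 2^(k*(m+1)) < 2^(k-1) + 1 := by
  have hP : (0:ℝ) < 2^(k*(m+1)) := by positivity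
  have e1 : (2:ℝ)^(-((k:ℤ)*(((m+1:ℕ):ℤ)-1)) - 1) = 2^(k-1) / 2^(k*(m+1)) := by
    rw [eq_div_iff hP.ne', ← zpow_natCast, ← zpow_natCast, ← zpow_add₀ (by norm_num)]
    congr 1
    push_cast [Nat.cast_sub hk]
    ring
  have e2 : (2:ℝ)^(-((k:ℤ)*((m+1:ℕ):ℤ))) = 1 / 2^(k*(m+1)) := by
    rw [eq_div_iff hP.ne', ← zpow_natCast, ← zpow_add₀ (by norm_num)]
    push_cast
    simp
  unfold Q1 Cube
  rw [e1, e2]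
  simp only [Set.mem_pi, Set.mem_univ, true_imp_iff, Set.mem_Ico, ← add_div]
  refine forall_congr' fun i => ?_
  rw [div_le_iff₀ hP, lt_div_iff₀ hP]

lemma aux_small {k m j : ℕ} {t : ℝ} (hk : 3 ≤ k)
    (h1 : (2:ℝ)^(k-1) ≤ t * 2^(k*(m+1))) (h2 : t * 2^(k*(m+1)) < 2^(k-1) + 1)
    (hj : j < m + 1) : 0 ≤ t * 2^(k*j) ∧ t * 2^(k*j) < 1 := by
  have hP : (0:ℝ) < 2^(k*(m+1)) := by positivity
  have ht : 0 ≤ t := by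
    by_contra h
    push Not at h
    have : t * 2^(k*(m+1)) < 0 := mul_neg_of_neg_of_pos h hP
    have : (0:ℝ) < 2^(k-1) := by positivity
    linarith
  refine ⟨by positivity, ?_⟩
  have hle : (2:ℝ)^(k*j) * 2^k ≤ 2^(k*(m+1)) := by
    rw [← pow_add]
    apply pow_le_pow_right₀ (by norm_num)
    nlinarith
  have h3 : t * (2^(k*j) * 2^k) ≤ t * 2^(k*(m+1)) := mul_le_mul_of_nonneg_left hle ht
  have h4 : (2:ℝ)^k = 2 * 2^(k-1) := by
    rw [← pow_succ']; congr 1; omega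
  have h5 : (1:ℝ) ≤ 2^(k-1) := one_le_pow₀ (by norm_num)
  by_contra h
  push Not at h
  have : (2:ℝ)^k ≤ t * 2^(k*j) * 2^k := by
    have : (0:ℝ) < 2^k := by positivity
    nlinarith
  nlinarith

lemma aux_digit_self {k m : ℕ} {t : ℝ} (hk : 3 ≤ k)
    (h1 : (2:ℝ)^(k-1) ≤ t * 2^(k*(m+1))) (h2 : t * 2^(k*(m+1)) < 2^(k-1) + 1) :
    digit k (m+1) t = 2^(k-1) := by
  unfold digit
  have : ⌊t * 2^(k*(m+1))⌋ = (2:ℤ)^(k-1) := by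
    rw [Int.floor_eq_iff]
    push_cast
    exact ⟨h1, h2⟩
  rw [this]
  apply Int.emod_eq_of_lt (by positivity)
  exact pow_lt_pow_right₀ (by norm_num) (by omega)

lemma aux_digit_lt {k m j : ℕ} {t : ℝ} (hk : 3 ≤ k)
    (h1 : (2:ℝ)^(k-1) ≤ t * 2^(k*(m+1))) (h2 : t * 2^(k*(m+1)) < 2^(k-1) + 1)
    (hj : j < m + 1) : digit k j t = 0 := by
  unfold digit
  have : ⌊t * 2^(k*j)⌋ = 0 := by
    rw [Int.floor_eq_zero_iff]
    exact aux_small hk h1 h2 hj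
  rw [this]
  simp

lemma aux_wk {n k m : ℕ} (hn : 1 ≤ n) (hk : 3 ≤ k) {z : Fin n → ℝ}
    (hz : z ∈ Q1 n k (m+1)) :
    wk n k z = ((2:ℝ≥0∞)^(k*n) / ((2:ℝ≥0∞)^((k-1)*n) + 1))^(m+1) := by
  rw [aux_mem_Q1 (by omega)] at hz
  unfold wk
  have hp : (0:ℤ) < 2^(k-1) := by positivity
  rw [tsum_eq_single m]
  · apply Set.indicator_of_mem
    refine ⟨fun i => ?_, fun i => ⟨fun j _ hj => ?_, aux_digit_self hk (hz i).1 (hz i).2⟩⟩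
    · have := aux_small (j := 0) hk (hz i).1 (hz i).2 (by omega)
      simpa using this
    · rw [aux_digit_lt hk (hz i).1 (hz i).2 hj]
      exact hp
  · intro m' hm'
    apply Set.indicator_of_notMem
    rintro ⟨-, h⟩
    have h0 := h ⟨0, hn⟩
    have hz0 := hz ⟨0, hn⟩
    rcases lt_or_gt_of_ne hm' with hlt | hgt
    · have := h0.2
      rw [aux_digit_lt hk hz0.1 hz0.2 (by omega)] at this
      exact hp.ne this
    · have := h0.1 (m+1) (by omega) (by omega)
      rw [aux_digit_self hk hz0.1 hz0.2] at this
      exact lt_irrefl _ this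

lemma aux_Gamma {n k : ℕ} (hk : 3 ≤ k) {z : Fin n → ℝ} (hz : z ∈ Gamma n k) (i : Fin n) :
    0 ≤ z i ∧ z i < 1 := by
  obtain ⟨m, hm⟩ := Set.mem_iUnion.1 hz
  rw [aux_mem_Q1 (m := m+2) (by omega)] at hm
  have := aux_small (j := 0) hk (hm i).1 (hm i).2 (by omega)
  simpa using this

lemma aux_volume (n : ℕ) (a : Fin n → ℝ) (l : ℝ) :
    volume (Cube n a l) = ENNReal.ofReal l ^ n := by
  unfold Cube
  rw [volume_pi_pi]
  simp

lemma aux_meas (n : ℕ) (a : Fin n → ℝ) (l : ℝ) : MeasurableSet (Cube n a l) := by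
  unfold Cube
  exact MeasurableSet.univ_pi fun i => measurableSet_Ico

/-- Points in a small cube only see the `k`-th component. -/
lemma aux_sep {n k k' : ℕ} (hn : 1 ≤ n) (hk : 3 ≤ k) (hk' : 3 ≤ k') (hne : k' ≠ k)
    {x y a : Fin n → ℝ} {l : ℝ} (hl : l ≤ (2:ℝ)^(k-2))
    (hx : (fun i => x i - (2:ℝ)^k) ∈ Gamma n k) (hxQ : x ∈ Cube n a l)
    (hyQ : y ∈ Cube n a l) : (fun i => y i - (2:ℝ)^k') ∉ Gamma n k' := by
  intro hy
  let i : Fin n := ⟨0, hn⟩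
  obtain ⟨x1, x2⟩ := aux_Gamma hk hx i
  obtain ⟨y1, y2⟩ := aux_Gamma hk' hy i
  have hx3 := hxQ i (Set.mem_univ _)
  have hy3 := hyQ i (Set.mem_univ _)
  simp only [Set.mem_Ico] at hx3 hy3
  have e : (2:ℝ)^k = 4 * 2^(k-2) := by
    rw [show (4:ℝ) = 2^2 by norm_num, ← pow_add]; congr 1; omega
  have h2 : (2:ℝ) ≤ 2^(k-2) := by
    calc (2:ℝ) = 2^1 := by norm_num
      _ ≤ _ := pow_le_pow_right₀ (by norm_num) (by omega)
  rcases lt_or_gt_of_ne hne with h | h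
  · have : (2:ℝ)^k' ≤ 2^(k-1) := pow_le_pow_right₀ (by norm_num) (by omega)
    have e' : (2:ℝ)^(k-1) = 2 * 2^(k-2) := by
      rw [← pow_succ']; congr 1; omega
    linarith
  · have : (2:ℝ)^(k+1) ≤ 2^k' := pow_le_pow_right₀ (by norm_num) (by omega)
    rw [pow_succ] at this
    linarith

lemma aux_bigW {n k : ℕ} (hn : 1 ≤ n) (hk : 3 ≤ k)
    {x y a : Fin n → ℝ} {l : ℝ} (hl : l ≤ (2:ℝ)^(k-2))
    (hx : (fun i => x i - (2:ℝ)^k) ∈ Gamma n k) (hxQ : x ∈ Cube n a l)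
    (hyQ : y ∈ Cube n a l) :
    bigW n y = (Gamma n k).indicator (fun z => Ak n k * wk n k z)
      (fun i => y i - (2:ℝ)^k) := by
  obtain ⟨K, rfl⟩ : ∃ K, k = K + 3 := ⟨k - 3, by omega⟩
  unfold bigW
  rw [tsum_eq_single K]
  intro k' hk'
  apply Set.indicator_of_notMem
  exact aux_sep hn hk (by omega) (by omega) hl hx hxQ hyQ

/-- The translate of `Q_1^m(k)` by `2⃗^k`. -/
def auxS (n k m : ℕ) : Set (Fin n → ℝ) :=
  Cube n (fun _ => (2:ℝ)^(-(k*(m-1) : ℤ) - 1) + 2^k) ((2:ℝ)^(-(k*m : ℤ)))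

lemma aux_mem_S {n k m : ℕ} (y : Fin n → ℝ) :
    y ∈ auxS n k m ↔ (fun i => y i - (2:ℝ)^k) ∈ Q1 n k m := by
  unfold auxS Q1 Cube
  simp only [Set.mem_pi, Set.mem_univ, true_imp_iff, Set.mem_Ico]
  refine forall_congr' fun i => ?_
  constructor <;> rintro ⟨h1, h2⟩ <;> constructor <;> linarith

lemma aux_vol_S (n k m : ℕ) : volume (auxS n k m) = ((2:ℝ≥0∞)^(k*n))⁻¹ ^ m := by
  unfold auxS
  rw [aux_volume]
  have : (2:ℝ)^(-(k*m : ℤ)) = ((2:ℝ)^(k*m))⁻¹ := by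
    rw [zpow_neg]; norm_cast
  rw [this, ENNReal.ofReal_inv_of_pos (by positivity), ENNReal.ofReal_pow (by norm_num)]
  simp only [ENNReal.ofReal_ofNat, ← ENNReal.inv_pow, ← pow_mul]
  congr 2
  ring

lemma aux_overlap {n k m i : ℕ} (hn : 1 ≤ n) (hk : 3 ≤ k)
    {x a : Fin n → ℝ} {l : ℝ}
    (hx : (fun i => x i - (2:ℝ)^k) ∈ Q1 n k (m+1)) (hxQ : x ∈ Cube n a l) :
    volume (auxS n k (m+1+(i+1)) ∩ Cube n a l) ≤
      ((2:ℝ≥0∞)^(k*n))⁻¹ ^ (i+1) * volume (Cube n a l) := by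
  rcases Set.eq_empty_or_nonempty (auxS n k (m+1+(i+1)) ∩ Cube n a l) with h | ⟨y, hyS, hyQ⟩
  · rw [h]; simp
  refine (measure_mono Set.inter_subset_left).trans ?_
  rw [aux_vol_S, pow_add, mul_comm]
  gcongr
  rw [← aux_vol_S, auxS, aux_volume, aux_volume]
  gcongr
  have e2 : (2:ℝ)^(-((k:ℤ)*((m+1:ℕ):ℤ))) = ((2:ℝ)^(k*(m+1)))⁻¹ := by
    rw [zpow_neg]; norm_cast
  rw [e2]
  rw [aux_mem_S, show m+1+(i+1) = (m+1+i)+1 by ring, aux_mem_Q1 (by omega)] at hyS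
  rw [aux_mem_Q1 (by omega)] at hx
  let o : Fin n := ⟨0, hn⟩
  obtain ⟨x1, x2⟩ := hx o
  obtain ⟨y1, y2⟩ := hyS o
  obtain ⟨-, y3⟩ := aux_small (j := m+1) hk y1 y2 (by omega)
  have hx3 := hxQ o (Set.mem_univ _)
  have hy3 := hyQ o (Set.mem_univ _)
  simp only [Set.mem_Ico] at hx3 hy3
  have h4 : (4:ℝ) ≤ 2^(k-1) := by
    calc (4:ℝ) = 2^2 := by norm_num
      _ ≤ _ := pow_le_pow_right₀ (by norm_num) (by omega)
  have hP : (0:ℝ) < 2^(k*(m+1)) := by positivity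
  rw [inv_le_iff_one_le_mul₀ hP]
  have : (x o - y o) * 2^(k*(m+1)) ≤ l * 2^(k*(m+1)) :=
    mul_le_mul_of_nonneg_right (by linarith) hP.le
  nlinarith


/-- For `n ≥ 1`, `k ≥ 3`, every `x ∈ 2⃗^k + Γ(k)` and every axis-parallel
cube `Q ∋ x` of side length `ℓ(Q) ≤ 2^{k-2}`: `|Q|⁻¹ ∫_Q w ≤ 9^n w(x)`. -/
theorem bigW_small_cube_average (n k : ℕ) (hn : 1 ≤ n) (hk : 3 ≤ k)
    (x : Fin n → ℝ) (hx : (fun i => x i - (2:ℝ)^k) ∈ Gamma n k)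
    (a : Fin n → ℝ) (l : ℝ) (hl0 : 0 < l) (hl : l ≤ (2:ℝ)^(k-2))
    (hxQ : x ∈ Cube n a l) :
    (volume (Cube n a l))⁻¹ * ∫⁻ y in Cube n a l, bigW n y ≤ 9^n * bigW n x := by
  obtain ⟨m0, hm⟩ := Set.mem_iUnion.1 hx
  obtain ⟨m, rfl⟩ : ∃ m, m = m0 + 2 := ⟨_, rfl⟩
  have hm : (fun i => x i - (2:ℝ)^k) ∈ Q1 n k (m0 + 2 + 1) := hm
  generalize m0 + 2 = m at hm
  set L : ℝ≥0∞ := (2:ℝ≥0∞)^(k*n) / ((2:ℝ≥0∞)^((k-1)*n) + 1) with hL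
  set A := Ak n k with hA
  set q : ℝ≥0∞ := ((2:ℝ≥0∞)^(k*n))⁻¹ with hq
  set V := volume (Cube n a l) with hV
  have hV0 : V ≠ 0 := by
    rw [hV, aux_volume]; positivity
  have hVt : V ≠ ∞ := by
    rw [hV, aux_volume]; exact ENNReal.pow_ne_top ENNReal.ofReal_ne_top
  have hone : (1:ℝ≥0∞) ≤ (2:ℝ≥0∞)^((k-1)*n) := one_le_pow₀ (by norm_num)
  have hL1 : 1 ≤ L := by
    rw [hL, ENNReal.le_div_iff_mul_le (Or.inl (by simp)) (Or.inl (by finiteness)), one_mul]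
    calc (2:ℝ≥0∞)^((k-1)*n) + 1 ≤ (2:ℝ≥0∞)^((k-1)*n) + (2:ℝ≥0∞)^((k-1)*n) := by gcongr
      _ = (2:ℝ≥0∞)^((k-1)*n + 1) := by rw [pow_succ, mul_two]
      _ ≤ _ := by
        apply pow_le_pow_right₀ (by norm_num)
        obtain ⟨K, rfl⟩ : ∃ K, k = K + 1 := ⟨k - 1, by omega⟩
        rw [Nat.add_sub_cancel]
        nlinarith
  have hLq : L * q ≤ 2⁻¹ := by
    rw [hL, hq, div_eq_mul_inv, mul_right_comm,
      ENNReal.mul_inv_cancel (by simp) (by finiteness), one_mul]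
    apply ENNReal.inv_le_inv.2
    calc (2:ℝ≥0∞) = 1 + 1 := by norm_num
      _ ≤ _ := by gcongr
  have hbx : bigW n x = A * L^(m+1) := by
    rw [aux_bigW hn hk hl hx hxQ hxQ, Set.indicator_of_mem hx, aux_wk hn hk hm]
  have hby : ∀ y ∈ Cube n a l, bigW n y ≤ A * L^(m+1) +
      ∑' i : ℕ, (auxS n k (m+1+(i+1))).indicator (fun _ => A * L^(m+1+(i+1))) y := by
    intro y hy
    rw [aux_bigW hn hk hl hx hxQ hy]
    by_cases hG : (fun i => y i - (2:ℝ)^k) ∈ Gamma n k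
    · rw [Set.indicator_of_mem hG]
      obtain ⟨j, hj⟩ := Set.mem_iUnion.1 hG
      rw [aux_wk (m := j+2) hn hk hj]
      rcases le_or_gt (j+2+1) (m+1) with h | h
      · refine le_trans ?_ le_self_add
        gcongr
      · obtain ⟨i, hi⟩ : ∃ i, j + 2 + 1 = m+1+(i+1) := ⟨j + 2 - m - 1, by omega⟩
        refine le_trans ?_ le_add_self
        refine le_trans ?_ (ENNReal.le_tsum i)
        rw [Set.indicator_of_mem, hi]
        rw [aux_mem_S, ← hi]
        exact hj
    · rw [Set.indicator_of_notMem hG]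
      exact zero_le
  have hmS : ∀ j, MeasurableSet (auxS n k j) := fun j => aux_meas _ _ _
  have hint : ∫⁻ y in Cube n a l, bigW n y ≤ A * L^(m+1) * V + A * L^(m+1) * V := by
    calc ∫⁻ y in Cube n a l, bigW n y
        ≤ ∫⁻ y in Cube n a l, (A * L^(m+1) +
          ∑' i : ℕ, (auxS n k (m+1+(i+1))).indicator (fun _ => A * L^(m+1+(i+1))) y) :=
          setLIntegral_mono' (aux_meas _ _ _) hby
      _ = A * L^(m+1) * V + ∑' i : ℕ, A * L^(m+1+(i+1)) *
            volume (auxS n k (m+1+(i+1)) ∩ Cube n a l) := by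
          rw [lintegral_add_left measurable_const, setLIntegral_const, lintegral_tsum]
          · congr 1
            refine tsum_congr fun i => ?_
            rw [lintegral_indicator_const (hmS _), Measure.restrict_apply (hmS _)]
          · intro i
            exact (measurable_const.indicator (hmS _)).aemeasurable
      _ ≤ A * L^(m+1) * V + ∑' i : ℕ, A * L^(m+1) * V * 2⁻¹^(i+1) := by
          refine add_le_add_right (ENNReal.tsum_le_tsum fun i => ?_) _
          calc A * L^(m+1+(i+1)) * volume (auxS n k (m+1+(i+1)) ∩ Cube n a l)
              ≤ A * L^(m+1+(i+1)) * (q^(i+1) * V) := by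
                gcongr
                exact aux_overlap hn hk hm hxQ
            _ = A * L^(m+1) * V * (L * q)^(i+1) := by
                rw [pow_add, mul_pow]; ring
            _ ≤ _ := by gcongr
      _ = _ := by
          rw [ENNReal.tsum_mul_left, ENNReal.tsum_geometric_add_one]
          simp [ENNReal.one_sub_inv_two, ENNReal.inv_mul_cancel]
  rw [hbx]
  calc V⁻¹ * ∫⁻ y in Cube n a l, bigW n y
      ≤ V⁻¹ * (A * L^(m+1) * V + A * L^(m+1) * V) := by gcongr
    _ = (V⁻¹ * V) * (2 * (A * L^(m+1))) := by ring
    _ = 2 * (A * L^(m+1)) := by rw [ENNReal.inv_mul_cancel hV0 hVt, one_mul]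
    _ ≤ 9^n * (A * L^(m+1)) := by
        gcongr
        calc (2:ℝ≥0∞) ≤ 9^1 := by norm_num
          _ ≤ 9^n := pow_le_pow_right₀ (by norm_num) hn
end
end
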